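/- The split-plurality SRS R^splitP satisfies NT, WIVIP, and TO; moreover, if |X| ≥ 3, R^splitP satisfies neither slide independence (SI) nor independence of irrelevant coalitions (IIC). -/

import Mathlib

/-!
Social ranking solutions (SRSs).  The set of individuals is a finite type `X`;
coalitions are elements of `Finset X` (so the domain of a power relation is the
whole power set `𝔛 = 2^X`).  A weak order `≿ ∈ ℛ(𝔛)` is encoded as a relation
`r : Finset X → Finset X → Prop` together with (when needed) its list of
equivalence classes `L = [Σ₁, …, Σ_l]` in strictly decreasing order
(`IsClassList r L`).
-/

namespace SocialRanking

variable {X : Type*} [Fintype X] [DecidableEq X]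

/-- A weak order: a reflexive, complete and transitive binary relation. -/
def IsWeakOrder {A : Type*} (r : A → A → Prop) : Prop :=
  Reflexive r ∧ (∀ a b, r a b ∨ r b a) ∧ Transitive r

/-- A social ranking solution maps every weak order on `2^X` to a weak order on `X`. -/
def IsSRS (R : (Finset X → Finset X → Prop) → X → X → Prop) : Prop :=
  ∀ r, IsWeakOrder r → IsWeakOrder (R r)

/-- `IsClassList r L` : `L = [Σ₁, …, Σ_l]` is the list of the equivalence classes of
the weak order `r` on `2^X`, in strictly decreasing order (`≿ : Σ₁ ≻ ⋯ ≻ Σ_l`):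
every class is nonempty, every coalition lies in exactly one class, and
`S ≿ T ↔ i ≤ j` whenever `S ∈ Σᵢ` and `T ∈ Σⱼ` (0-based indices). -/
def IsClassList (r : Finset X → Finset X → Prop) (L : List (Finset (Finset X))) : Prop :=
  (∀ C ∈ L, C.Nonempty) ∧
  (∀ S : Finset X, ∃! i : ℕ, i < L.length ∧ S ∈ L.getD i ∅) ∧
  (∀ i j : ℕ, i < L.length → j < L.length →
    ∀ S ∈ L.getD i ∅, ∀ T ∈ L.getD j ∅, (r S T ↔ i ≤ j))

/-- The asymmetric (strict) part `P` of a relation. -/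
def StrictPart {A : Type*} (p : A → A → Prop) (a b : A) : Prop := p a b ∧ ¬ p b a

/-- The symmetric part `I` (indifference) of a relation. -/
def IndiffPart {A : Type*} (p : A → A → Prop) (a b : A) : Prop := p a b ∧ p b a

/-- The restrictions of `p` and `q` to `{x, y}` coincide. -/
def AgreeOn (p q : X → X → Prop) (x y : X) : Prop :=
  ∀ a ∈ ({x, y} : Set X), ∀ b ∈ ({x, y} : Set X), (p a b ↔ q a b)

/-- `|Δ[x]|` : the number of coalitions in `Δ` containing `x`. -/
def count (Δ : Finset (Finset X)) (x : X) : ℕ := (Δ.filter (fun S => x ∈ S)).card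

/-! ### Independence axioms and further axioms -/

/-- WIVIP: for a dichotomous `≿ : Σ₁ ≻ Σ₂`, any `x ∈ ⋂Σ₁` is socially strictly above
any `y ∉ ⋂Σ₁`. -/
def WIVIP (R : (Finset X → Finset X → Prop) → X → X → Prop) : Prop :=
  ∀ (r : Finset X → Finset X → Prop) (C₁ C₂ : Finset (Finset X)),
    IsClassList r [C₁, C₂] →
    ∀ x y : X, (∀ S ∈ C₁, x ∈ S) → (∃ S ∈ C₁, y ∉ S) →
    StrictPart (R r) x y

/-- IWS (independence from the worst set): if `≿ : Σ₁ ≻ ⋯ ≻ Σ_{l-1} ≻ Σ_l` (`l ≥ 2`)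
and `≿'` is obtained from `≿` by partitioning the worst class `Σ_l` into ordered
classes `Γ₁ ≻' ⋯ ≻' Γ_{l'}`, then `x P_≿ y` implies `x P_≿' y`. -/
def IWS (R : (Finset X → Finset X → Prop) → X → X → Prop) : Prop :=
  ∀ (r r' : Finset X → Finset X → Prop) (L Γ : List (Finset (Finset X)))
    (W : Finset (Finset X)),
    L ≠ [] → IsClassList r (L ++ [W]) → IsClassList r' (L ++ Γ) →
    ∀ x y : X, StrictPart (R r) x y → StrictPart (R r') x y

/-- IBS (independence from the best set): if `≿ : Σ₁ ≻ Σ₂ ≻ ⋯ ≻ Σ_l` (`l ≥ 2`)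
and `≿'` is obtained from `≿` by partitioning the best class `Σ₁` into ordered
classes `Γ₁ ≻' ⋯ ≻' Γ_{l'}`, then `x P_≿ y` implies `x P_≿' y`. -/
def IBS (R : (Finset X → Finset X → Prop) → X → X → Prop) : Prop :=
  ∀ (r r' : Finset X → Finset X → Prop) (B : Finset (Finset X))
    (L Γ : List (Finset (Finset X))),
    L ≠ [] → IsClassList r (B :: L) → IsClassList r' (Γ ++ L) →
    ∀ x y : X, StrictPart (R r) x y → StrictPart (R r') x y

/-- TO (tops-only): two weak orders with the same best equivalence class get the
same social ranking. -/
def TO (R : (Finset X → Finset X → Prop) → X → X → Prop) : Prop :=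
  ∀ (r r' : Finset X → Finset X → Prop) (B : Finset (Finset X))
    (L L' : List (Finset (Finset X))),
    IsClassList r (B :: L) → IsClassList r' (B :: L') → R r = R r'

/-- The class list obtained from `L` by sliding `Δ` out of class `k₁` into class `k₂`
(`Σ_{k₁}` is replaced by `Σ_{k₁} \ Δ` and `Σ_{k₂}` by `Σ_{k₂} ∪ Δ`; if `Δ = Σ_{k₁}`
the emptied class disappears). -/
def slide (L : List (Finset (Finset X))) (k₁ k₂ : ℕ) (Δ : Finset (Finset X)) :
    List (Finset (Finset X)) :=
  ((L.set k₁ ((L.getD k₁ ∅) \ Δ)).set k₂ ((L.getD k₂ ∅) ∪ Δ)).filter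
    (fun C => decide (C ≠ ∅))

/-- SI (slide independence): sliding a proper subfamily `Δ ⊊ Σ_{k₁}` with
`|Δ[x]| = |Δ[y]|` into another class does not change the social ranking on `{x, y}`. -/
def SI (R : (Finset X → Finset X → Prop) → X → X → Prop) : Prop :=
  ∀ (r r' : Finset X → Finset X → Prop) (L : List (Finset (Finset X)))
    (k₁ k₂ : ℕ) (x y : X) (Δ : Finset (Finset X)),
    IsClassList r L → k₁ < L.length → k₂ < L.length →
    Δ ⊂ L.getD k₁ ∅ → count Δ x = count Δ y →
    IsClassList r' (slide L k₁ k₂ Δ) →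
    AgreeOn (R r) (R r') x y

/-- SSI (strong slide independence): as SI, but `Δ ⊆ Σ_{k₁}` may be the whole class
(in which case the class disappears). -/
def SSI (R : (Finset X → Finset X → Prop) → X → X → Prop) : Prop :=
  ∀ (r r' : Finset X → Finset X → Prop) (L : List (Finset (Finset X)))
    (k₁ k₂ : ℕ) (x y : X) (Δ : Finset (Finset X)),
    IsClassList r L → k₁ < L.length → k₂ < L.length →
    Δ ⊆ L.getD k₁ ∅ → count Δ x = count Δ y →
    IsClassList r' (slide L k₁ k₂ Δ) →
    AgreeOn (R r) (R r') x y

/-- Top-SI: the condition of SI restricted to slides out of the best class (`k₁ = 1`,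
i.e. index `0`). -/
def TopSI (R : (Finset X → Finset X → Prop) → X → X → Prop) : Prop :=
  ∀ (r r' : Finset X → Finset X → Prop) (L : List (Finset (Finset X)))
    (k₂ : ℕ) (x y : X) (Δ : Finset (Finset X)),
    IsClassList r L → 0 < L.length → k₂ < L.length →
    Δ ⊂ L.getD 0 ∅ → count Δ x = count Δ y →
    IsClassList r' (slide L 0 k₂ Δ) →
    AgreeOn (R r) (R r') x y

/-- The class list of `≿' : Σ₁ ≻' ⋯ ≻' Σ_{k-1} ≻' Δ ≻' Σ_k \ Δ ≻' ⋯ ≻' Σ_l`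
(empty classes disappear). -/
def inuiList (L : List (Finset (Finset X))) (k : ℕ) (Δ : Finset (Finset X)) :
    List (Finset (Finset X)) :=
  (L.take k ++ [Δ, (L.getD k ∅) \ Δ] ++ L.drop (k + 1)).filter
    (fun C => decide (C ≠ ∅))

/-- INUI (independence of non-unanimous improvements). -/
def INUI (R : (Finset X → Finset X → Prop) → X → X → Prop) : Prop :=
  ∀ (r r' : Finset X → Finset X → Prop) (L : List (Finset (Finset X)))
    (k : ℕ) (Δ : Finset (Finset X)) (x y : X),
    IsClassList r L → k < L.length → Δ ⊆ L.getD k ∅ →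
    (∃ S ∈ Δ, x ∉ S) → (∃ S ∈ Δ, y ∉ S) →
    IsClassList r' (inuiList L k Δ) →
    AgreeOn (R r) (R r') x y

/-- The weak order `≿_π := {(π(S), π(T)) : S ≿ T}` induced by a permutation `π` of `X`. -/
def permRel (π : Equiv.Perm X) (r : Finset X → Finset X → Prop) :
    Finset X → Finset X → Prop :=
  fun A B => r (A.image π.symm) (B.image π.symm)

/-- NT (neutrality). -/
def NT (R : (Finset X → Finset X → Prop) → X → X → Prop) : Prop :=
  ∀ (π : Equiv.Perm X) (r : Finset X → Finset X → Prop), IsWeakOrder r →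
    ∀ x y : X, (R (permRel π r) (π x) (π y) ↔ R r x y)

/-- IIC (independence of irrelevant coalitions). -/
def IIC (R : (Finset X → Finset X → Prop) → X → X → Prop) : Prop :=
  ∀ (r r' : Finset X → Finset X → Prop), IsWeakOrder r → IsWeakOrder r' →
    ∀ x y : X,
      (∀ S : Finset X, x ∉ S → y ∉ S →
        (r (insert x S) (insert y S) ↔ r' (insert x S) (insert y S))) →
      (R r x y ↔ R r' x y)

/-! ### The social ranking solutions -/

/-- `θ_≿(x) = (|Σ₁[x]|, …, |Σ_l[x]|)`. -/
def theta (L : List (Finset (Finset X))) (x : X) : List ℕ := L.map (fun C => count C x)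

/-- The lexicographic order `a ≥^L b` on vectors of naturals. -/
def GeLex (a b : List ℕ) : Prop :=
  a = b ∨ ∃ k < a.length, (∀ j < k, a.getD j 0 = b.getD j 0) ∧ b.getD k 0 < a.getD k 0

/-- The dual lexicographic order `a ≥^DL b` (read from the last coordinate;
fewer appearances in worse classes is better). -/
def GeDualLex (a b : List ℕ) : Prop :=
  a = b ∨ ∃ k < a.length, (∀ j, k < j → a.getD j 0 = b.getD j 0) ∧ a.getD k 0 < b.getD k 0

/-- The lexicographic excellence solution `R^L` : `x R^L_≿ y ↔ θ_≿(x) ≥^L θ_≿(y)`. -/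
def RL (r : Finset X → Finset X → Prop) (x y : X) : Prop :=
  ∀ L, IsClassList r L → GeLex (theta L x) (theta L y)

/-- The dual lexicographic excellence solution `R^DL`. -/
def RDL (r : Finset X → Finset X → Prop) (x y : X) : Prop :=
  ∀ L, IsClassList r L → GeDualLex (theta L x) (theta L y)

/-- Plurality `R^P` : `x R^P_≿ y ↔ |Σ₁[x]| ≥ |Σ₁[y]|`. -/
def RP (r : Finset X → Finset X → Prop) (x y : X) : Prop :=
  ∀ L, IsClassList r L → count (L.getD 0 ∅) y ≤ count (L.getD 0 ∅) x

/-- `e_≿(x)` : the largest `k` such that `x` belongs to every coalition of each of the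
first `k` equivalence classes (`0` if `x ∉ T₁`). -/
def eIIS (L : List (Finset (Finset X))) (x : X) : ℕ :=
  (L.takeWhile (fun C => decide (∀ S ∈ C, x ∈ S))).length

/-- The intersection initial segment rule `R^IIS` : `x R^IIS_≿ y ↔ e_≿(x) ≥ e_≿(y)`. -/
def RIIS (r : Finset X → Finset X → Prop) (x y : X) : Prop :=
  ∀ L, IsClassList r L → eIIS L y ≤ eIIS L x

/-- The constant-`X` rule: everybody is ranked indifferent. -/
def RconstX : (Finset X → Finset X → Prop) → X → X → Prop := fun _ _ _ => True

/-- The split-plurality score `s^split_≿(z) = ∑_{S ∈ Σ₁ : z ∈ S} 1/|S|`. -/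
def splitScore (C : Finset (Finset X)) (z : X) : ℚ :=
  ∑ S ∈ C.filter (fun S => z ∈ S), (1 : ℚ) / (S.card : ℚ)

/-- Split-plurality `R^splitP`. -/
def RsplitP (r : Finset X → Finset X → Prop) (x y : X) : Prop :=
  ∀ L, IsClassList r L → splitScore (L.getD 0 ∅) y ≤ splitScore (L.getD 0 ∅) x

/-- Plurality with tie-breaking by a linear order `t = ▷` :
`x R^{P,▷}_≿ y ↔ (x P^P_≿ y ∨ (x I^P_≿ y ∧ x ▷ y))`. -/
def RPtie (t : X → X → Prop) (r : Finset X → Finset X → Prop) (x y : X) : Prop :=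
  ∀ L, IsClassList r L →
    (count (L.getD 0 ∅) y < count (L.getD 0 ∅) x ∨
      (count (L.getD 0 ∅) x = count (L.getD 0 ∅) y ∧ t x y))


theorem top_mem {r : Finset X → Finset X → Prop} {L : List (Finset (Finset X))}
    (h : IsClassList r L) (S : Finset X) : S ∈ L.getD 0 ∅ ↔ ∀ T, r S T := by
  obtain ⟨h1, h2, h3⟩ := h
  constructor
  · intro hS T
    obtain ⟨j, ⟨hj, hT⟩, -⟩ := h2 T
    exact (h3 0 j (by omega) hj S hS T hT).2 (Nat.zero_le _)
  · intro hS
    obtain ⟨i, ⟨hi, hSi⟩, -⟩ := h2 S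
    have h0 : 0 < L.length := by omega
    obtain ⟨T, hT⟩ := h1 (L.getD 0 ∅) (by
      rw [List.getD_eq_getElem _ _ h0]; exact List.getElem_mem h0)
    have := (h3 i 0 hi h0 S hSi T hT).1 (hS T)
    obtain rfl : i = 0 := by omega
    exact hSi

theorem top_unique {r : Finset X → Finset X → Prop} {L L' : List (Finset (Finset X))}
    (h : IsClassList r L) (h' : IsClassList r L') : L.getD 0 ∅ = L'.getD 0 ∅ := by
  ext S
  rw [top_mem h, top_mem h']

theorem RsplitP_iff {r : Finset X → Finset X → Prop} {L : List (Finset (Finset X))}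
    (h : IsClassList r L) (x y : X) :
    RsplitP r x y ↔ splitScore (L.getD 0 ∅) y ≤ splitScore (L.getD 0 ∅) x := by
  constructor
  · intro H
    exact H L h
  · intro H L' h'
    rw [top_unique h' h]
    exact H

theorem mem_perm (π : Equiv.Perm X) (C : Finset (Finset X)) (S : Finset X) :
    S ∈ C.image (fun A => A.image π) ↔ S.image π.symm ∈ C := by
  rw [Finset.mem_image]
  constructor
  · rintro ⟨A, hA, rfl⟩
    simpa [Finset.image_image] using hA
  · intro h
    exact ⟨_, h, by simp [Finset.image_image]⟩

theorem getD_perm (π : Equiv.Perm X) (L : List (Finset (Finset X))) (i : ℕ) :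
    (L.map (fun C => C.image (fun A => A.image π))).getD i ∅
      = (L.getD i ∅).image (fun A => A.image π) := by
  have := List.getD_map (l := L) (n := i) (d := (∅ : Finset (Finset X)))
    (fun C => C.image (fun A => A.image π))
  simpa using this

theorem classList_perm (π : Equiv.Perm X) {r : Finset X → Finset X → Prop}
    {L : List (Finset (Finset X))} (h : IsClassList r L) :
    IsClassList (permRel π r) (L.map (fun C => C.image (fun A => A.image π))) := by
  obtain ⟨h1, h2, h3⟩ := h
  refine ⟨?_, ?_, ?_⟩
  · intro C hC
    obtain ⟨D, hD, rfl⟩ := List.mem_map.1 hC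
    exact (h1 D hD).image _
  · intro S
    simp only [getD_perm, mem_perm, List.length_map]
    exact h2 _
  · intro i j hi hj S hS T hT
    rw [getD_perm, mem_perm] at hS hT
    rw [List.length_map] at hi hj
    exact h3 i j hi hj _ hS _ hT

theorem score_perm (π : Equiv.Perm X) (C : Finset (Finset X)) (z : X) :
    splitScore (C.image (fun A => A.image π)) (π z) = splitScore C z := by
  unfold splitScore
  symm
  refine Finset.sum_bij (fun A _ => A.image π) ?_ ?_ ?_ ?_
  · intro A hA
    rw [Finset.mem_filter] at hA ⊢
    exact ⟨Finset.mem_image_of_mem _ hA.1, Finset.mem_image_of_mem _ hA.2⟩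
  · intro A _ B _ hAB
    exact Finset.image_injective π.injective hAB
  · intro B hB
    rw [Finset.mem_filter, Finset.mem_image] at hB
    obtain ⟨⟨A, hA, rfl⟩, hz⟩ := hB
    refine ⟨A, ?_, rfl⟩
    rw [Finset.mem_filter]
    refine ⟨hA, ?_⟩
    simpa using hz
  · intro A _
    rw [Finset.card_image_of_injective _ π.injective]

theorem perm_mp (π : Equiv.Perm X) (r : Finset X → Finset X → Prop) (x y : X)
    (h : RsplitP (permRel π r) (π x) (π y)) : RsplitP r x y := by
  intro L hL
  have := h _ (classList_perm π hL)
  rwa [getD_perm, score_perm, score_perm] at this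

theorem split_NT : NT (X := X) RsplitP := by
  intro π r _ x y
  refine ⟨perm_mp π r x y, fun h => perm_mp π.symm _ _ _ ?_⟩
  have e : permRel π.symm (permRel π r) = r := by
    funext A B
    simp [permRel, Finset.image_image]
  rw [e]
  simpa using h

theorem split_TO : TO (X := X) RsplitP := by
  intro r r' B L L' h h'
  funext x y
  rw [RsplitP_iff h, RsplitP_iff h']
  rfl

theorem split_WIVIP : WIVIP (X := X) RsplitP := by
  intro r C₁ C₂ h x y hx hy
  have key : splitScore C₁ y < splitScore C₁ x := by
    obtain ⟨S, hS, hyS⟩ := hy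
    unfold splitScore
    rw [Finset.filter_true_of_mem hx]
    refine Finset.sum_lt_sum_of_subset (Finset.filter_subset _ _) hS (by simp [hyS]) ?_ ?_
    · have : 0 < S.card := Finset.card_pos.2 ⟨x, hx S hS⟩
      positivity
    · intros
      positivity
  unfold StrictPart
  rw [RsplitP_iff h, RsplitP_iff h]
  exact ⟨key.le, not_le.2 key⟩

/-- The dichotomous order with best class `C`. -/
def dich (C : Finset (Finset X)) (S T : Finset X) : Prop := S ∈ C ∨ T ∉ C

theorem dich_weak (C : Finset (Finset X)) : IsWeakOrder (dich C) := by
  unfold dich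
  refine ⟨fun a => ?_, fun a b => ?_, fun a b c => ?_⟩ <;> dsimp only <;> tauto

theorem dich_list (C : Finset (Finset X)) (h1 : C.Nonempty) (h2 : Cᶜ.Nonempty) :
    IsClassList (dich C) [C, Cᶜ] := by
  refine ⟨?_, ?_, ?_⟩
  · intro D hD
    simp only [List.mem_cons, List.not_mem_nil, or_false] at hD
    rcases hD with rfl | rfl <;> assumption
  · intro S
    by_cases hS : S ∈ C
    · refine ⟨0, by simp [hS], ?_⟩
      rintro i ⟨hi, hm⟩
      simp only [List.length_cons, List.length_nil] at hi
      interval_cases i <;> simp_all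
    · refine ⟨1, by simp [hS], ?_⟩
      rintro i ⟨hi, hm⟩
      simp only [List.length_cons, List.length_nil] at hi
      interval_cases i <;> simp_all
  · intro i j hi hj S hS T hT
    simp only [List.length_cons, List.length_nil] at hi hj
    unfold dich
    interval_cases i <;> interval_cases j <;> simp_all

theorem dich_split (C : Finset (Finset X)) (h1 : C.Nonempty) (h2 : Cᶜ.Nonempty) (x y : X) :
    RsplitP (dich C) x y ↔ splitScore C y ≤ splitScore C x :=
  RsplitP_iff (dich_list C h1 h2) x y

theorem si_apply (H : SI (X := X) RsplitP) (C Δ : Finset (Finset X)) (x y : X)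
    (hC1 : C.Nonempty) (hC2 : Cᶜ.Nonempty) (hΔ : Δ ⊂ C) (hc : count Δ x = count Δ y) :
    splitScore C x ≤ splitScore C y ↔ splitScore (C \ Δ) x ≤ splitScore (C \ Δ) y := by
  have hD1 : (C \ Δ).Nonempty := Finset.sdiff_nonempty.2 hΔ.2
  have e2 : Cᶜ ∪ Δ = (C \ Δ)ᶜ := by
    ext S
    simp only [Finset.mem_union, Finset.mem_compl, Finset.mem_sdiff]
    tauto
  have hD2 : (C \ Δ)ᶜ.Nonempty := by
    rw [← e2]
    exact hC2.mono Finset.subset_union_left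
  have es : slide [C, Cᶜ] 0 1 Δ = [C \ Δ, (C \ Δ)ᶜ] := by
    have a1 := hD1.ne_empty
    have a2 := hD2.ne_empty
    unfold slide
    simp only [List.getD_cons_zero, List.getD_cons_succ, List.set_cons_zero,
      List.set_cons_succ, e2]
    rw [List.filter_cons_of_pos (by simpa using hΔ.2), List.filter_cons_of_pos (by simpa using a2),
      List.filter_nil]
  have h2 := H (dich C) (dich (C \ Δ)) [C, Cᶜ] 0 1 x y Δ
    (dich_list _ hC1 hC2) (by simp) (by simp) hΔ hc
    (by rw [es]; exact dich_list _ hD1 hD2) y (by simp) x (by simp)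
  rwa [dich_split _ hC1 hC2, dich_split _ hD1 hD2] at h2

theorem split_not_SI (x y z : X) (hxy : x ≠ y) (hxz : x ≠ z) (hyz : y ≠ z) :
    ¬ SI (X := X) RsplitP := by
  intro H
  have n1 : ({x} : Finset X) ≠ {y, z} := by
    intro h
    have : y ∈ ({x} : Finset X) := by rw [h]; simp
    simp at this
    exact hxy this.symm
  have n2 : ({y, z} : Finset X) ≠ ∅ := Finset.insert_ne_empty _ _
  have n3 : ({y} : Finset X) ≠ {y, z} := by
    intro h
    have : z ∈ ({y} : Finset X) := by rw [h]; simp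
    simp at this
    exact hyz this.symm
  have hC1 : ({∅, {x}, {y, z}} : Finset (Finset X)).Nonempty := ⟨∅, by simp⟩
  have hC2 : ({∅, {x}, {y, z}} : Finset (Finset X))ᶜ.Nonempty :=
by
    refine ⟨{y}, ?_⟩
    simp only [Finset.mem_compl, Finset.mem_insert, Finset.mem_singleton]
    rintro (h | h | h)
    · exact (Finset.singleton_ne_empty y) h
    · exact hxy.symm (Finset.singleton_injective h)
    · exact n3 h
  have e1 : ({∅, {x}, {y, z}} : Finset (Finset X)) \ {{x}, {y, z}} = {∅} := by
    ext S
    simp only [Finset.mem_sdiff, Finset.mem_insert, Finset.mem_singleton]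
    constructor
    · rintro ⟨h | h, h'⟩
      · exact h
      · exact absurd h h'
    · rintro rfl
      refine ⟨Or.inl rfl, ?_⟩
      rintro (h | h)
      · exact (Finset.singleton_ne_empty x) h.symm
      · exact n2 h.symm
  have hss : ({{x}, {y, z}} : Finset (Finset X)) ⊂ {∅, {x}, {y, z}} := by
    refine Finset.ssubset_insert ?_
    simp only [Finset.mem_insert, Finset.mem_singleton]
    rintro (h | h)
    · exact (Finset.singleton_ne_empty x) h.symm
    · exact n2 h.symm
  have hc : count ({{x}, {y, z}} : Finset (Finset X)) x = count {{x}, {y, z}} y := by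
    simp [count, Finset.filter_insert, Finset.filter_singleton, hxy, hxz, hxy.symm]
  have g := (si_apply H _ _ x y hC1 hC2 hss hc).2
  rw [e1] at g
  have g := g (by simp [splitScore, Finset.filter_singleton])
  have c : ({y, z} : Finset X).card = 2 := Finset.card_pair hyz
  simp [splitScore, Finset.filter_insert, Finset.filter_singleton, hxy, hxz, hxy.symm, c] at g
  norm_num at g

theorem split_not_IIC (x y z : X) (hxy : x ≠ y) (hxz : x ≠ z) (hyz : y ≠ z) :
    ¬ IIC (X := X) RsplitP := by
  intro H
  have hC1 : ({{x}, {y, z}} : Finset (Finset X)).Nonempty := ⟨{x}, by simp⟩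
  have n2 : ({y, z} : Finset X) ≠ ∅ := Finset.insert_ne_empty _ _
  have hC2 : ({{x}, {y, z}} : Finset (Finset X))ᶜ.Nonempty := by
    refine ⟨∅, ?_⟩
    simp only [Finset.mem_compl, Finset.mem_insert, Finset.mem_singleton]
    rintro (h | h)
    · exact (Finset.singleton_ne_empty x) h.symm
    · exact n2 h.symm
  have hD1 : ({{y, z}} : Finset (Finset X)).Nonempty := ⟨{y, z}, by simp⟩
  have hD2 : ({{y, z}} : Finset (Finset X))ᶜ.Nonempty := by
    refine ⟨∅, ?_⟩
    simp only [Finset.mem_compl, Finset.mem_singleton]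
    exact n2.symm
  have c : ({y, z} : Finset X).card = 2 := Finset.card_pair hyz
  have := H (dich {{x}, {y, z}}) (dich {{y, z}}) (dich_weak _) (dich_weak _) x y ?_
  · rw [dich_split _ hC1 hC2, dich_split _ hD1 hD2] at this
    have g := this.1 (by
      simp [splitScore, Finset.filter_insert, Finset.filter_singleton, hxy, hxz, hxy.symm, c]
      try norm_num)
    simp [splitScore, Finset.filter_singleton, hxy, hxz, c] at g
    try norm_num at g
  · intro S hx hy
    simp only [dich, Finset.mem_insert, Finset.mem_singleton]
    have p1 : insert x S ≠ {y, z} := by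
      intro h
      have : x ∈ ({y, z} : Finset X) := by rw [← h]; simp
      simp [hxy, hxz] at this
    have p2 : insert y S ≠ {x} := by
      intro h
      have : y ∈ ({x} : Finset X) := by rw [← h]; simp
      simp [hxy.symm] at this
    have p3 : insert x S = {x} → insert y S ≠ {y, z} := by
      intro h h'
      have a : z ∈ insert y S := by rw [h']; simp
      have b : z ∈ S := by simpa [hyz.symm] using a
      have : z ∈ ({x} : Finset X) := by rw [← h]; simp [b]
      simp [hxz.symm] at this
    tauto

/-- Split-plurality satisfies NT, WIVIP and TO; moreover if `|X| ≥ 3` it satisfies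
neither SI nor IIC. -/
theorem splitplurality_props [Nonempty X] :
    (NT (X := X) RsplitP ∧ WIVIP (X := X) RsplitP ∧ TO (X := X) RsplitP) ∧
      (3 ≤ Fintype.card X → ¬ SI (X := X) RsplitP ∧ ¬ IIC (X := X) RsplitP) := by
  refine ⟨⟨split_NT, split_WIVIP, split_TO⟩, fun h => ?_⟩
  obtain ⟨x, y, z, hxy, hxz, hyz⟩ := Fintype.two_lt_card_iff.1 h
  exact ⟨split_not_SI x y z hxy hxz hyz, split_not_IIC x y z hxy hxz hyz⟩

end SocialRanking
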